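/- Let a > 4 and f_a(x) = a·x·(1−x). Assume |f_a'(x)| > 1 for every x ∈ [0,1] with f_a(x) ≤ 1. Then the set Λ = {x ∈ [0,1] : for all n ∈ ℕ, f_a^[n](x) ∈ [0,1]} has no isolated points: every point of Λ is an accumulation point of Λ. -/

import Mathlib

/-- The quadratic (logistic) map. -/
def logisticMap (a : ℝ) : ℝ → ℝ := fun x => a * x * (1 - x)

/-!
A point `p` whose orbit stays in `[0, 1]` can be joined, for every `n`, to another such point by a
segment whose first `n` iterates stay in `[0, 1]`: join `f^[n] p` to `0` or `1` and pull the segment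
back through the monotone branches of `f`, each of which covers `[0, 1]`. Now take `l < p < u` close
to `p`. If the orbit of `l` or of `u` stays in `[0, 1]`, that point is the required neighbor of `p`.
Otherwise both leave within `n` steps for some `n`, so the segment contains neither of them and its
other endpoint lies between `l` and `u`.
-/

open Set

section SurvivorSet

variable {α : Type*} {f : α → α} {s : Set α} {x : α}

/-- The survivor set of `s` under `f`, as in the theory of open dynamical systems: the points of `s`
whose forward orbit never leaves `s`. Membership of the point itself is the case `n = 0`. -/
def survivorSet (f : α → α) (s : Set α) : Set α := {x | ∀ n : ℕ, f^[n] x ∈ s}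

theorem survivorSet_subset : survivorSet f s ⊆ s := fun _ hx => hx 0

theorem map_mem_survivorSet (hx : x ∈ survivorSet f s) : f x ∈ survivorSet f s :=
  fun n => hx (n + 1)

theorem mem_survivorSet_of_map_mem (hx : x ∈ s) (hfx : f x ∈ survivorSet f s) :
    x ∈ survivorSet f s
  | 0 => hx
  | n + 1 => hfx n

theorem mem_survivorSet_of_isFixedPt (hx : x ∈ s) (hfix : Function.IsFixedPt f x) :
    x ∈ survivorSet f s := fun n => by rwa [hfix.iterate n]

end SurvivorSet

section FullBranch

variable {α : Type*} [LinearOrder α] {f : α → α} {s t : Set α} {p : α}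

/-- `t` is a full branch of `f` over `s`: an order-connected piece of `s` on which `f` is monotone
or antitone and whose image covers `s`. The image may be larger than `s`, so that branches can be
cut at the turning points of `f`. -/
structure IsFullBranch (f : α → α) (s t : Set α) : Prop where
  subset : t ⊆ s
  ordConnected : t.OrdConnected
  monotoneOn_or_antitoneOn : MonotoneOn f t ∨ AntitoneOn f t
  surjOn : SurjOn f t s

theorem IsFullBranch.mapsTo_uIcc (ht : IsFullBranch f s t) {x y : α} (hx : x ∈ t) (hy : y ∈ t) :
    MapsTo f (uIcc x y) (uIcc (f x) (f y)) := by
  have hxy : uIcc x y ⊆ t := ht.ordConnected.uIcc_subset hx hy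
  rcases ht.monotoneOn_or_antitoneOn with hf | hf
  · exact (hf.mono hxy).mapsTo_uIcc
  · exact (hf.mono hxy).mapsTo_uIcc

theorem exists_mem_survivorSet_ne_forall_mapsTo_uIcc (hs : s.OrdConnected)
    (hnontrivial : (survivorSet f s).Nontrivial)
    (hbranch : ∀ p ∈ s, f p ∈ s → ∃ t, IsFullBranch f s t ∧ p ∈ t)
    (hp : p ∈ survivorSet f s) (n : ℕ) :
    ∃ x ∈ survivorSet f s, x ≠ p ∧ ∀ k ≤ n, MapsTo f^[k] (uIcc p x) s := by
  induction n generalizing p with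
  | zero =>
    obtain ⟨x, hx, hxp⟩ := hnontrivial.exists_ne p
    refine ⟨x, hx, hxp, fun k hk => ?_⟩
    obtain rfl := Nat.le_zero.mp hk
    exact hs.uIcc_subset (survivorSet_subset hp) (survivorSet_subset hx)
  | succ n ih =>
    obtain ⟨y, hy, hyp, hmaps⟩ := ih (map_mem_survivorSet hp)
    obtain ⟨t, ht, hpt⟩ := hbranch p (hp 0) (hp 1)
    obtain ⟨x, hxt, rfl⟩ := ht.surjOn (survivorSet_subset hy)
    refine ⟨x, mem_survivorSet_of_map_mem (ht.subset hxt) hy, fun h => hyp (congrArg f h), ?_⟩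
    rintro (_ | k) hk
    · exact (ht.ordConnected.uIcc_subset hpt hxt).trans ht.subset
    · exact (hmaps k (by lia)).comp (ht.mapsTo_uIcc hpt hxt)

theorem preperfect_survivorSet [TopologicalSpace α] [OrderTopology α] [DenselyOrdered α]
    [NoMinOrder α] [NoMaxOrder α] (hs : s.OrdConnected)
    (hnontrivial : (survivorSet f s).Nontrivial)
    (hbranch : ∀ p ∈ s, f p ∈ s → ∃ t, IsFullBranch f s t ∧ p ∈ t) :
    Preperfect (survivorSet f s) := by
  intro p hp
  rw [accPt_iff_nhds]
  intro U hU
  obtain ⟨l, u, -, hnhds, hlu⟩ := exists_Icc_mem_subset_of_mem_nhds hU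
  obtain ⟨hlp, hpu⟩ := Icc_mem_nhds_iff.mp hnhds
  by_cases hl : l ∈ survivorSet f s
  · exact ⟨l, ⟨hlu ⟨le_rfl, (hlp.trans hpu).le⟩, hl⟩, hlp.ne⟩
  by_cases hu : u ∈ survivorSet f s
  · exact ⟨u, ⟨hlu ⟨(hlp.trans hpu).le, le_rfl⟩, hu⟩, hpu.ne'⟩
  obtain ⟨i, hi⟩ := not_forall.mp hl
  obtain ⟨j, hj⟩ := not_forall.mp hu
  obtain ⟨x, hx, hxp, hmaps⟩ :=
    exists_mem_survivorSet_ne_forall_mapsTo_uIcc hs hnontrivial hbranch hp (max i j)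
  have hlx : l ≤ x := by
    by_contra! hxl
    exact hi (hmaps i (le_max_left i j) (mem_uIcc_of_ge hxl.le hlp.le))
  have hxu : x ≤ u := by
    by_contra! hux
    exact hj (hmaps j (le_max_right i j) (mem_uIcc_of_le hpu.le hux.le))
  exact ⟨x, ⟨hlu ⟨hlx, hxu⟩, hx⟩, hxp⟩

end FullBranch

section LogisticMap

variable {a : ℝ}

theorem continuous_logisticMap (a : ℝ) : Continuous (logisticMap a) := by
  unfold logisticMap
  fun_prop

@[simp]
theorem logisticMap_zero (a : ℝ) : logisticMap a 0 = 0 := by simp [logisticMap]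

@[simp]
theorem logisticMap_one (a : ℝ) : logisticMap a 1 = 0 := by simp [logisticMap]

theorem logisticMap_one_half (a : ℝ) : logisticMap a (1 / 2) = a / 4 := by
  unfold logisticMap
  ring

theorem logisticMap_sub_logisticMap (a x y : ℝ) :
    logisticMap a y - logisticMap a x = a * (y - x) * (1 - x - y) := by
  unfold logisticMap
  ring

theorem monotoneOn_logisticMap (ha : 0 ≤ a) : MonotoneOn (logisticMap a) (Iic (1 / 2)) := by
  intro x hx y hy hxy
  rw [mem_Iic] at hx hy
  rw [← sub_nonneg, logisticMap_sub_logisticMap]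
  exact mul_nonneg (mul_nonneg ha (by linarith)) (by linarith)

theorem antitoneOn_logisticMap (ha : 0 ≤ a) : AntitoneOn (logisticMap a) (Ici (1 / 2)) := by
  intro x hx y hy hxy
  rw [mem_Ici] at hx hy
  rw [← sub_nonpos, logisticMap_sub_logisticMap]
  exact mul_nonpos_of_nonneg_of_nonpos (mul_nonneg ha (by linarith)) (by linarith)

theorem isFullBranch_logisticMap_left (ha : 4 ≤ a) :
    IsFullBranch (logisticMap a) (Icc 0 1) (Icc 0 (1 / 2)) where
  subset := Icc_subset_Icc_right (by norm_num)
  ordConnected := ordConnected_Icc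
  monotoneOn_or_antitoneOn :=
    .inl ((monotoneOn_logisticMap (by linarith)).mono Icc_subset_Iic_self)
  surjOn := by
    have hivt := intermediate_value_Icc (show (0 : ℝ) ≤ 1 / 2 by norm_num)
      (continuous_logisticMap a).continuousOn
    rw [logisticMap_zero, logisticMap_one_half] at hivt
    exact (Icc_subset_Icc_right (by linarith)).trans hivt

theorem isFullBranch_logisticMap_right (ha : 4 ≤ a) :
    IsFullBranch (logisticMap a) (Icc 0 1) (Icc (1 / 2) 1) where
  subset := Icc_subset_Icc_left (by norm_num)
  ordConnected := ordConnected_Icc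
  monotoneOn_or_antitoneOn :=
    .inr ((antitoneOn_logisticMap (by linarith)).mono Icc_subset_Ici_self)
  surjOn := by
    have hivt := intermediate_value_Icc' (show (1 / 2 : ℝ) ≤ 1 by norm_num)
      (continuous_logisticMap a).continuousOn
    rw [logisticMap_one, logisticMap_one_half] at hivt
    exact (Icc_subset_Icc_right (by linarith)).trans hivt

theorem exists_isFullBranch_logisticMap (ha : 4 ≤ a) {p : ℝ} (hp : p ∈ Icc (0 : ℝ) 1) :
    ∃ t, IsFullBranch (logisticMap a) (Icc 0 1) t ∧ p ∈ t := by
  rcases le_total p (1 / 2) with h | h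
  · exact ⟨_, isFullBranch_logisticMap_left ha, hp.1, h⟩
  · exact ⟨_, isFullBranch_logisticMap_right ha, h, hp.2⟩

theorem nontrivial_survivorSet_logisticMap (a : ℝ) :
    (survivorSet (logisticMap a) (Icc 0 1)).Nontrivial := by
  have hzero : 0 ∈ survivorSet (logisticMap a) (Icc 0 1) :=
    mem_survivorSet_of_isFixedPt (by simp) (logisticMap_zero a)
  have hone : 1 ∈ survivorSet (logisticMap a) (Icc 0 1) :=
    mem_survivorSet_of_map_mem (by simp) (by rwa [logisticMap_one])
  exact ⟨0, hzero, 1, hone, zero_ne_one⟩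

end LogisticMap

theorem logistic_invariant_set_perfect_general (a : ℝ) (ha : 4 ≤ a) :
    Preperfect {x : ℝ | x ∈ Icc (0 : ℝ) 1 ∧ ∀ n : ℕ, (logisticMap a)^[n] x ∈ Icc (0 : ℝ) 1} := by
  have hset : {x : ℝ | x ∈ Icc (0 : ℝ) 1 ∧ ∀ n : ℕ, (logisticMap a)^[n] x ∈ Icc (0 : ℝ) 1} =
      survivorSet (logisticMap a) (Icc 0 1) :=
    Subset.antisymm (fun _ hx => hx.2) fun _ hx => ⟨survivorSet_subset hx, hx⟩
  rw [hset]
  exact preperfect_survivorSet ordConnected_Icc (nontrivial_survivorSet_logisticMap a)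
    fun _ hp _ => exists_isFullBranch_logisticMap ha hp

/-- For `a > 4`, if `|f_a'(x)| > 1` for every `x ∈ [0,1]` with `f_a x ≤ 1`, then every point of
`Λ = {x ∈ [0,1] : ∀ n, f_a^[n] x ∈ [0,1]}` is an accumulation point of `Λ`. -/
theorem logistic_invariant_set_perfect (a : ℝ) (ha : 4 < a)
    (hderiv : ∀ x ∈ Set.Icc (0 : ℝ) 1, logisticMap a x ≤ 1 → 1 < |deriv (logisticMap a) x|) :
    ∀ p ∈ {x : ℝ | x ∈ Set.Icc (0 : ℝ) 1 ∧ ∀ n : ℕ,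
        (logisticMap a)^[n] x ∈ Set.Icc (0 : ℝ) 1},
      AccPt p (Filter.principal {x : ℝ | x ∈ Set.Icc (0 : ℝ) 1 ∧ ∀ n : ℕ,
        (logisticMap a)^[n] x ∈ Set.Icc (0 : ℝ) 1}) :=
  logistic_invariant_set_perfect_general a ha.le
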